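/- Let (C(k), δ, σ, τ) be a cocyclic system of R-modules over a commutative ring R, and for each k let Δ_k := Σ_{j=1}^{k+1} (−1)^{k(j−1)} σ_{k,k+1−j} ∘ τ_{k+1}^j : C(k+1) → C(k) be the (sign-stripped) chain-level BV operator. Then for every k ∈ ℕ and every normalized element x ∈ N(k+2) = ⋂_{0≤i≤k+1} ker(σ_{k+1,i}), the element Δ_k(Δ_{k+1}(x)) lies in the degenerate submodule D(k) ⊆ C(k). -/

import Mathlib

universe u v

variable {R : Type u} [CommRing R] (C : ℕ → Type v)
  [∀ k, AddCommGroup (C k)] [∀ k, Module R (C k)]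

/-- The degenerate submodule `D(k) = Σ_{0 ≤ i ≤ k−1} range (δ_{k,i}) ⊆ C(k)` of a cosimplicial
system of `R`-modules (with `D(0) = 0`).  Here `d m i : C(m) → C(m+1)` denotes the coface map
`δ_{m+1,i}`. -/
def degenerateSubmodule (d : ∀ k : ℕ, ℕ → (C k →ₗ[R] C (k + 1))) : ∀ k : ℕ, Submodule R (C k)
  | 0 => ⊥
  | m + 1 => ⨆ i ∈ Finset.range (m + 1), LinearMap.range (d m i)

/-- The normalized submodule `N(k) = ⋂_{0 ≤ i ≤ k−1} ker (σ_{k−1,i}) ⊆ C(k)` of a cosimplicial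
system of `R`-modules (with `N(0) = C(0)`).  Here `s m i : C(m+1) → C(m)` denotes the
codegeneracy map `σ_{m,i}`. -/
def normalizedSubmodule (s : ∀ k : ℕ, ℕ → (C (k + 1) →ₗ[R] C k)) : ∀ k : ℕ, Submodule R (C k)
  | 0 => ⊤
  | m + 1 => ⨅ i ∈ Finset.range (m + 1), LinearMap.ker (s m i)

/-- The (sign-stripped) chain-level BV operator
`Δ_k := Σ_{j=1}^{k+1} (−1)^{k(j−1)} σ_{k,k+1−j} ∘ τ_{k+1}^j : C(k+1) → C(k)` of a cocyclic
system of `R`-modules. -/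
def bvOperator (s : ∀ k : ℕ, ℕ → (C (k + 1) →ₗ[R] C k)) (τ : ∀ k : ℕ, Module.End R (C k))
    (k : ℕ) : C (k + 1) →ₗ[R] C k :=
  ∑ j ∈ Finset.Icc 1 (k + 1),
    ((-1 : ℤ) ^ (k * (j - 1))) • (s k (k + 1 - j)).comp (τ (k + 1) ^ j)

/-- **Lemma (strict `S¹`-complex)** (Section 3.2 of the paper).  For a cocyclic system of
`R`-modules `(C(k), δ, σ, τ)`, the square of the chain-level BV operator maps normalized
elements into degenerate ones: for every `k` and every `x ∈ N(k+2)`, the element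
`Δ_k (Δ_{k+1} x)` lies in `D(k)`.  (Thus `δ_cyc² = 0` on the complex of non-degenerate chains.)

Here `d m i : C(m) → C(m+1)` is the coface map `δ_{m+1,i}` (meaningful for `i ≤ m+1`),
`s m i : C(m+1) → C(m)` is the codegeneracy map `σ_{m,i}` (meaningful for `i ≤ m`), and
`τ k : C(k) → C(k)` is the cocyclic operator, with the cosimplicial and cocyclic identities
imposed in exactly the corresponding ranges. -/
theorem bvOperator_sq_mem_degenerate
    (d : ∀ k : ℕ, ℕ → (C k →ₗ[R] C (k + 1)))
    (s : ∀ k : ℕ, ℕ → (C (k + 1) →ₗ[R] C k))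
    (τ : ∀ k : ℕ, Module.End R (C k))
    (hδδ : ∀ m i j : ℕ, i ≤ j → j + 1 ≤ m + 2 →
      (d (m + 1) (j + 1)).comp (d m i) = (d (m + 1) i).comp (d m j))
    (hσσ : ∀ m i j : ℕ, i ≤ j → j ≤ m →
      (s m j).comp (s (m + 1) i) = (s m i).comp (s (m + 1) (j + 1)))
    (hσδ_lt : ∀ m i j : ℕ, i ≤ j → j ≤ m →
      (s (m + 1) (j + 1)).comp (d (m + 1) i) = (d m i).comp (s m j))
    (hσδ_eq₁ : ∀ k j : ℕ, j ≤ k → (s k j).comp (d k j) = LinearMap.id)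
    (hσδ_eq₂ : ∀ k j : ℕ, j ≤ k → (s k j).comp (d k (j + 1)) = LinearMap.id)
    (hσδ_gt : ∀ m i j : ℕ, j ≤ i → i ≤ m →
      (s (m + 1) j).comp (d (m + 1) (i + 2)) = (d m (i + 1)).comp (s m j))
    (hτpow : ∀ k : ℕ, τ k ^ (k + 1) = 1)
    (hτδ₀ : ∀ m : ℕ, (τ (m + 1)).comp (d m 0) = d m (m + 1))
    (hτδ : ∀ m i : ℕ, i ≤ m → (τ (m + 1)).comp (d m (i + 1)) = (d m i).comp (τ m))
    (hτσ₀ : ∀ k : ℕ, (τ k).comp (s k 0) = (s k k).comp (τ (k + 1) ^ 2))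
    (hτσ : ∀ k i : ℕ, i + 1 ≤ k → (τ k).comp (s k (i + 1)) = (s k i).comp (τ (k + 1))) :
    ∀ k : ℕ, ∀ x : C (k + 2), x ∈ normalizedSubmodule C s (k + 2) →
      bvOperator C s τ k (bvOperator C s τ (k + 1) x) ∈ degenerateSubmodule C d k := by
  intro k x hx
  -- pointwise forms of the relations
  have hA : ∀ m j : ℕ, j ≤ m → ∀ y : C (m + 1),
      s m (m - j) ((τ (m + 1) ^ j) y) = (τ m ^ j) (s m m y) := by
    intro m j
    induction j with
    | zero => intro _ y; simp
    | succ j ih =>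
      intro hj y
      have h1 := LinearMap.congr_fun (hτσ m (m - (j + 1)) (by omega)) ((τ (m + 1) ^ j) y)
      simp only [LinearMap.comp_apply] at h1
      rw [show m - (j + 1) + 1 = m - j by omega, ih (by omega)] at h1
      rw [pow_succ', pow_succ', Module.End.mul_apply, Module.End.mul_apply]
      exact h1.symm
  have hB : ∀ m i : ℕ, i ≤ m → ∀ y : C (m + 1),
      s m m ((τ (m + 1) ^ (i + 2)) y) = (τ m ^ (i + 1)) (s m i y) := by
    intro m i
    induction i with
    | zero =>
      intro _ y
      have h1 := LinearMap.congr_fun (hτσ₀ m) y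
      simp only [LinearMap.comp_apply] at h1
      simpa using h1.symm
    | succ i ih =>
      intro hi y
      have h1 := LinearMap.congr_fun (hτσ m i hi) y
      simp only [LinearMap.comp_apply] at h1
      rw [show i + 1 + 2 = (i + 2) + 1 by omega, pow_succ (τ (m + 1)) (i + 2),
        Module.End.mul_apply, ih (by omega), ← h1, pow_succ (τ m) (i + 1), Module.End.mul_apply]
  have hbv : ∀ (m : ℕ) (y : C (m + 1)), bvOperator C s τ m y =
      ∑ j ∈ Finset.Icc 1 (m + 1),
        ((-1 : ℤ) ^ (m * (j - 1))) • (τ m ^ (j - 1)) (s m m (τ (m + 1) y)) := by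
    intro m y
    unfold bvOperator
    rw [LinearMap.sum_apply]
    refine Finset.sum_congr rfl fun j hj => ?_
    obtain ⟨h1, h2⟩ := Finset.mem_Icc.1 hj
    obtain ⟨i, rfl⟩ : ∃ i, j = i + 1 := ⟨j - 1, by omega⟩
    rw [LinearMap.smul_apply, LinearMap.comp_apply, pow_succ (τ (m + 1)) i, Module.End.mul_apply,
      show m + 1 - (i + 1) = m - i by omega, hA m i (by omega)]
    simp
  have hx0 : ∀ i, i ≤ k + 1 → s (k + 1) i x = 0 := by
    intro i hi
    simp only [normalizedSubmodule, Submodule.mem_iInf] at hx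
    exact hx i (Finset.mem_range.2 (by omega))
  have key : s k k (τ (k + 1) (bvOperator C s τ (k + 1) x)) = 0 := by
    rw [hbv (k + 1) x, map_sum, map_sum]
    refine Finset.sum_eq_zero fun j hj => ?_
    obtain ⟨h1, h2⟩ := Finset.mem_Icc.1 hj
    obtain ⟨i, rfl⟩ : ∃ i, j = i + 1 := ⟨j - 1, by omega⟩
    rw [map_zsmul, map_zsmul, Nat.add_sub_cancel, ← Module.End.mul_apply, ← pow_succ']
    suffices h : s k k ((τ (k + 1) ^ (i + 1)) (s (k + 1) (k + 1) (τ (k + 1 + 1) x))) = 0 by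
      rw [h, smul_zero]
    by_cases hi : i ≤ k
    · rw [← hA (k + 1) (i + 1) (by omega), ← Module.End.mul_apply, ← pow_succ,
        show k + 1 - (i + 1) = k - i by omega]
      have h3 := LinearMap.congr_fun (hσσ k (k - i) k (by omega) le_rfl)
        ((τ (k + 1 + 1) ^ (i + 1 + 1)) x)
      simp only [LinearMap.comp_apply] at h3
      rw [h3, hB (k + 1) i (by omega), hx0 i (by omega), map_zero, map_zero]
    · obtain rfl : i = k + 1 := by omega
      rw [hτpow (k + 1), Module.End.one_apply]
      have h3 := LinearMap.congr_fun (hσσ k k k le_rfl le_rfl) (τ (k + 1 + 1) x)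
      have h4 := LinearMap.congr_fun (hτσ (k + 1) k le_rfl) x
      simp only [LinearMap.comp_apply] at h3 h4
      rw [← h3, ← h4, hx0 (k + 1) le_rfl, map_zero, map_zero]
  rw [hbv k, key]
  simp
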